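/- arXiv:2409.19752 — 6 statements merged into one kernel-verified Lean document; each statement's English description precedes it below -/
import Mathlib

section
/- Let ε ∈ ℝ and let u : (0,∞) × (0,∞) → ℝ be positive, continuously differentiable in t, and twice continuously differentiable in r. Fix (t,r) with t > 0, r > 0. Then u satisfies the radial equation r^{-n} ∂ₜu = u^q · r^{1-N} ∂_r( r^{n₁+N-1} u^{m-1} |∂_r(u^k)|^{p-2} ∂_r u ) + ε r^{-n} t^l u^{β} at (t,r) if and only if the function v := u^{1-q} satisfies r^{-n} ∂ₜv = r^{1-N} ∂_r( r^{n₁+N-1} v^{m₂-1} |∂_r(v^{k₂})|^{p-2} ∂_r v ) + ε(1-q) r^{-n} t^l v^{β₂} at (t,r). -/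
open Real Set Filter Topology

/-- The substitution `v = u^{1-q}` transforms the radial equation
`r^{-n} ∂ₜu = u^q r^{1-N} ∂_r(r^{n₁+N-1} u^{m-1} |∂_r(u^k)|^{p-2} ∂_r u) + ε r^{-n} t^l u^β`
into
`r^{-n} ∂ₜv = r^{1-N} ∂_r(r^{n₁+N-1} v^{m₂-1} |∂_r(v^{k₂})|^{p-2} ∂_r v) + ε(1-q) r^{-n} t^l v^{β₂}`,
pointwise at any `(t,r)` with `t > 0`, `r > 0`. -/
theorem stmt2
    (p q k m N n n₁ l β ε : ℝ)
    (hp : 2 ≤ p) (hq0 : 0 < q) (hq1 : q < 1) (hk : 1 ≤ k) (hm : 1 ≤ m)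
    (hn0 : 0 ≤ n) (hnN : n < N) (hpn : n + n₁ < p)
    (m₂ k₂ β₂ : ℝ)
    (hm₂ : m₂ = m / (1 - q)) (hk₂ : k₂ = k / (1 - q))
    (hβ₂ : β₂ = (β - q) / (1 - q))
    (u : ℝ → ℝ → ℝ)
    (hupos : ∀ t, 0 < t → ∀ r, 0 < r → 0 < u t r)
    (hu_t : ∀ r, 0 < r → ContDiffOn ℝ 1 (fun t => u t r) (Ioi 0))
    (hu_r : ∀ t, 0 < t → ContDiffOn ℝ 2 (fun r => u t r) (Ioi 0))
    (t r : ℝ) (ht : 0 < t) (hr : 0 < r) :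
    (r ^ (-n) * deriv (fun s => u s r) t
      = u t r ^ q *
          (r ^ (1 - N) *
            deriv (fun ρ => ρ ^ (n₁ + N - 1) * u t ρ ^ (m - 1) *
              |deriv (fun σ => u t σ ^ k) ρ| ^ (p - 2) * deriv (fun σ => u t σ) ρ) r)
        + ε * r ^ (-n) * t ^ l * u t r ^ β)
    ↔
    (r ^ (-n) * deriv (fun s => u s r ^ (1 - q)) t
      = r ^ (1 - N) *
          deriv (fun ρ => ρ ^ (n₁ + N - 1) * (u t ρ ^ (1 - q)) ^ (m₂ - 1) *
            |deriv (fun σ => (u t σ ^ (1 - q)) ^ k₂) ρ| ^ (p - 2) *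
            deriv (fun σ => u t σ ^ (1 - q)) ρ) r
        + ε * (1 - q) * r ^ (-n) * t ^ l * (u t r ^ (1 - q)) ^ β₂) := by
  have h1q : 0 < 1 - q := by linarith
  have h1q' : (1 - q) ≠ 0 := h1q.ne'
  have hU : 0 < u t r := hupos t ht r hr
  have hdt : DifferentiableAt ℝ (fun s => u s r) t :=
    ((hu_t r hr).differentiableOn (by norm_num)).differentiableAt (Ioi_mem_nhds ht)
  have hdr : ∀ ρ, 0 < ρ → DifferentiableAt ℝ (fun σ => u t σ) ρ := fun ρ hρ =>
    ((hu_r t ht).differentiableOn (by norm_num)).differentiableAt (Ioi_mem_nhds hρ)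
  have e1 : deriv (fun s => u s r ^ (1 - q)) t
      = (1 - q) * u t r ^ (-q) * deriv (fun s => u s r) t := by
    have h := (hdt.hasDerivAt.rpow_const (p := 1 - q) (Or.inl hU.ne')).deriv
    rw [h, show (1 - q - 1 : ℝ) = -q by ring]
    ring
  have e2 : deriv (fun ρ => ρ ^ (n₁ + N - 1) * (u t ρ ^ (1 - q)) ^ (m₂ - 1) *
            |deriv (fun σ => (u t σ ^ (1 - q)) ^ k₂) ρ| ^ (p - 2) *
            deriv (fun σ => u t σ ^ (1 - q)) ρ) r
      = (1 - q) * deriv (fun ρ => ρ ^ (n₁ + N - 1) * u t ρ ^ (m - 1) *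
              |deriv (fun σ => u t σ ^ k) ρ| ^ (p - 2) * deriv (fun σ => u t σ) ρ) r := by
    rw [← deriv_const_mul_field]
    apply Filter.EventuallyEq.deriv_eq
    filter_upwards [Ioi_mem_nhds hr] with ρ hρ
    have hρ0 : 0 < ρ := hρ
    have hV : 0 < u t ρ := hupos t ht ρ hρ0
    have a1 : deriv (fun σ => u t σ ^ (1 - q)) ρ
        = (1 - q) * u t ρ ^ (-q) * deriv (fun σ => u t σ) ρ := by
      have h := ((hdr ρ hρ0).hasDerivAt.rpow_const (p := 1 - q) (Or.inl hV.ne')).deriv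
      rw [h, show (1 - q - 1 : ℝ) = -q by ring]
      ring
    have a2 : deriv (fun σ => (u t σ ^ (1 - q)) ^ k₂) ρ = deriv (fun σ => u t σ ^ k) ρ := by
      apply Filter.EventuallyEq.deriv_eq
      filter_upwards [Ioi_mem_nhds hρ0] with σ hσ
      rw [← Real.rpow_mul (hupos t ht σ hσ).le, hk₂, mul_div_cancel₀ _ h1q']
    have a3 : (u t ρ ^ (1 - q)) ^ (m₂ - 1) = u t ρ ^ (m - 1) * u t ρ ^ q := by
      rw [← Real.rpow_mul hV.le, ← Real.rpow_add hV, hm₂]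
      congr 1
      field_simp
      ring
    have a4 : u t ρ ^ q * u t ρ ^ (-q) = 1 := by
      rw [← Real.rpow_add hV]; simp
    rw [a1, a2, a3]
    linear_combination (ρ ^ (n₁ + N - 1) * u t ρ ^ (m - 1) *
      |deriv (fun σ => u t σ ^ k) ρ| ^ (p - 2) * deriv (fun σ => u t σ) ρ * (1 - q)) * a4
  have e3 : (u t r ^ (1 - q)) ^ β₂ = u t r ^ β * u t r ^ (-q) := by
    rw [← Real.rpow_mul hU.le, ← Real.rpow_add hU, hβ₂, mul_div_cancel₀ _ h1q', sub_eq_add_neg]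
  have e4 : u t r ^ q * u t r ^ (-q) = 1 := by
    rw [← Real.rpow_add hU]; simp
  rw [e1, e2, e3]
  generalize deriv (fun ρ => ρ ^ (n₁ + N - 1) * u t ρ ^ (m - 1) *
    |deriv (fun σ => u t σ ^ k) ρ| ^ (p - 2) * deriv (fun σ => u t σ) ρ) r = F
  generalize deriv (fun s => u s r) t = D
  constructor
  · intro h
    linear_combination ((1 - q) * u t r ^ (-q)) * h + (1 - q) * r ^ (1 - N) * F * e4
  · intro h
    apply mul_left_cancel₀ h1q'
    linear_combination (u t r ^ q) * h
      - ((1 - q) * (r ^ (-n) * D - ε * r ^ (-n) * t ^ l * u t r ^ β)) * e4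
end

section
/- Assume q ∈ (0,1), l > -1, and β₂ > max(1, l₅+1). Let v̄(t) = l₁ t^{(1+l)/(1-β₂)} with l₁ = [(1-q)(β₂-1)/(1+l)]^{1/(1-β₂)}, let τ(t) = l₆(1-β₂) t^{(l₅+1-β₂)/(1-β₂)}/(l₅+1-β₂) with l₆ = l₁^{m₂+k₂(p-2)-1} (so τ(t) > 0 for t > 0), and let φ(r) = p r^{(p-n-n₁)/p}/(p-n-n₁). Suppose w : (0,∞) × (0,∞) → ℝ is positive, continuously differentiable in its first variable and twice continuously differentiable in its second variable, and satisfies, for all τ > 0 and φ > 0, ∂_τ w = φ^{1-s} ∂_φ( φ^{s-1} w^{m₂-1} |∂_φ(w^{k₂})|^{p-2} ∂_φ w ) + (w^{β₂} + w)/(l₇ τ). Then the function v(t,r) := v̄(t) · w(τ(t), φ(r)) satisfies, for all t > 0 and r > 0, r^{-n} ∂ₜv = r^{1-N} ∂_r( r^{n₁+N-1} v^{m₂-1} |∂_r(v^{k₂})|^{p-2} ∂_r v ) + (1-q) r^{-n} t^l v^{β₂}. -/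
open Real Set Filter Topology

theorem aux_chain (F f : ℝ → ℝ) (a : ℝ) (ha : 0 < a)
    (hf : ∀ r, 0 < r → f r = r ^ a / a) (r : ℝ) (hr : 0 < r) :
    deriv (fun σ => F (f σ)) r = deriv F (f r) * r ^ (a - 1) := by
  have hd : HasDerivAt f (r ^ (a - 1)) r := by
    have h1 : HasDerivAt (fun x : ℝ => x ^ a / a) (a * r ^ (a - 1) / a) r :=
      (Real.hasDerivAt_rpow_const (Or.inl hr.ne')).div_const a
    rw [mul_div_cancel_left₀ _ ha.ne'] at h1
    refine h1.congr_of_eventuallyEq ?_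
    filter_upwards [lt_mem_nhds hr] with x hx using hf x hx
  have hfr : 0 < f r := by rw [hf r hr]; positivity
  by_cases hF : DifferentiableAt ℝ F (f r)
  · exact (hF.hasDerivAt.comp r hd).deriv
  · rw [deriv_zero_of_not_differentiableAt hF, zero_mul]
    apply deriv_zero_of_not_differentiableAt
    intro hG
    apply hF
    have hinv : ∀ x, 0 < x → (a * (x ^ a / a)) ^ (1 / a) = x := by
      intro x hx
      rw [mul_div_cancel₀ _ ha.ne', ← Real.rpow_mul hx.le, mul_one_div_cancel ha.ne', Real.rpow_one]
    have hg : DifferentiableAt ℝ (fun y : ℝ => (a * y) ^ (1 / a)) (f r) := by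
      have : DifferentiableAt ℝ (fun y : ℝ => a * y) (f r) := by fun_prop
      exact this.rpow_const (Or.inl (by positivity))
    have hgr : (fun y : ℝ => (a * y) ^ (1 / a)) (f r) = r := by
      simp only [hf r hr]; exact hinv r hr
    rw [← hgr] at hG
    have hc := DifferentiableAt.comp (f r) hG hg
    refine hc.congr_of_eventuallyEq ?_
    filter_upwards [lt_mem_nhds hfr] with y hy
    have hy' : 0 < (a * y) ^ (1 / a) := by positivity
    simp only [Function.comp]
    rw [hf _ hy', ← Real.rpow_mul (by positivity), one_div_mul_cancel ha.ne', Real.rpow_one,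
      mul_div_cancel_left₀ _ ha.ne']

theorem aux_flux (a s p N n n₁ m₂ k₂ V W D E ρ : ℝ) (ha : 0 < a) (hV : 0 < V) (hW : 0 < W)
    (hρ : 0 < ρ) (h1 : a * s = N - n) (h2 : a * p = p - n - n₁) :
    ρ ^ (n₁ + N - 1) * (V * W) ^ (m₂ - 1) * |V ^ k₂ * (D * ρ ^ (a - 1))| ^ (p - 2)
      * (V * (E * ρ ^ (a - 1)))
    = (a ^ (s - 1) * V ^ (m₂ + k₂ * (p - 2) - 1) * V) *
      ((ρ ^ a / a) ^ (s - 1) * W ^ (m₂ - 1) * |D| ^ (p - 2) * E) := by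
  have e1 : |V ^ k₂ * (D * ρ ^ (a - 1))| = V ^ k₂ * (|D| * ρ ^ (a - 1)) := by
    rw [abs_mul, abs_mul, abs_of_pos (Real.rpow_pos_of_pos hV _),
      abs_of_pos (Real.rpow_pos_of_pos hρ _)]
  have e2 : V ^ (m₂ + k₂ * (p - 2) - 1) = V ^ (m₂ - 1) * V ^ (k₂ * (p - 2)) := by
    rw [← Real.rpow_add hV]; congr 1; ring
  have e3 : (ρ ^ (n₁ + N - 1)) * ρ ^ ((a - 1) * (p - 2)) * ρ ^ (a - 1) = ρ ^ (a * (s - 1)) := by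
    rw [← Real.rpow_add hρ, ← Real.rpow_add hρ]; congr 1; linear_combination h2 - h1
  have e4 : (ρ ^ a / a) ^ (s - 1) * a ^ (s - 1) = ρ ^ (a * (s - 1)) := by
    rw [← Real.mul_rpow (by positivity) ha.le, div_mul_cancel₀ _ ha.ne', ← Real.rpow_mul hρ.le]
  rw [e1, Real.mul_rpow hV.le hW.le, Real.mul_rpow (by positivity) (by positivity),
    Real.mul_rpow (by positivity) (by positivity), ← Real.rpow_mul hV.le, ← Real.rpow_mul hρ.le, e2]
  rw [← e3] at e4
  linear_combination (-(V ^ (m₂ - 1) * V ^ (k₂ * (p - 2)) * V * W ^ (m₂ - 1) * |D| ^ (p - 2) * E)) * e4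

/-- If `w(τ,φ)` is a positive solution of
`∂_τ w = φ^{1-s} ∂_φ(φ^{s-1} w^{m₂-1} |∂_φ(w^{k₂})|^{p-2} ∂_φ w) + (w^{β₂}+w)/(l₇ τ)`
on `(0,∞) × (0,∞)`, then `v(t,r) = v̄(t) w(τ(t), φ(r))` solves the radial equation
`r^{-n} ∂ₜv = r^{1-N} ∂_r(r^{n₁+N-1} v^{m₂-1} |∂_r(v^{k₂})|^{p-2} ∂_r v) + (1-q) r^{-n} t^l v^{β₂}`
for all `t > 0`, `r > 0`. -/
theorem stmt3
    (p q k m N n n₁ l β : ℝ)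
    (hp : 2 ≤ p) (hq0 : 0 < q) (hq1 : q < 1) (hk : 1 ≤ k) (hm : 1 ≤ m)
    (hn0 : 0 ≤ n) (hnN : n < N) (hpn : n + n₁ < p)
    (m₂ k₂ β₂ s l₅ l₇ : ℝ)
    (hm₂ : m₂ = m / (1 - q)) (hk₂ : k₂ = k / (1 - q))
    (hβ₂ : β₂ = (β - q) / (1 - q))
    (hs : s = p * (N - n) / (p - n - n₁))
    (hl₅ : l₅ = (1 + l) * (m₂ + k₂ * (p - 2) - 1))
    (hl₇ : l₇ = -(l₅ + 1 - β₂) / (1 + l))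
    (hl : -1 < l) (hβ₂1 : 1 < β₂) (hβ₂l₅ : l₅ + 1 < β₂)
    (l₁ l₆ : ℝ)
    (hl₁ : l₁ = ((1 - q) * (β₂ - 1) / (1 + l)) ^ ((1 : ℝ) / (1 - β₂)))
    (hl₆ : l₆ = l₁ ^ (m₂ + k₂ * (p - 2) - 1))
    (vbar τ φfun : ℝ → ℝ)
    (hvbar : ∀ t, 0 < t → vbar t = l₁ * t ^ ((1 + l) / (1 - β₂)))
    (hτ : ∀ t, 0 < t →
      τ t = l₆ * (1 - β₂) * t ^ ((l₅ + 1 - β₂) / (1 - β₂)) / (l₅ + 1 - β₂))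
    (hτpos : ∀ t, 0 < t → 0 < τ t)
    (hφfun : ∀ r, 0 < r → φfun r = p * r ^ ((p - n - n₁) / p) / (p - n - n₁))
    (w : ℝ → ℝ → ℝ)
    (hwpos : ∀ x, 0 < x → ∀ y, 0 < y → 0 < w x y)
    (hw_τ : ∀ y, 0 < y → ContDiffOn ℝ 1 (fun x => w x y) (Ioi 0))
    (hw_φ : ∀ x, 0 < x → ContDiffOn ℝ 2 (fun y => w x y) (Ioi 0))
    (hwpde : ∀ x, 0 < x → ∀ y, 0 < y →
      deriv (fun x' => w x' y) x
        = y ^ (1 - s) *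
            deriv (fun y' => y' ^ (s - 1) * w x y' ^ (m₂ - 1) *
              |deriv (fun y'' => w x y'' ^ k₂) y'| ^ (p - 2) *
              deriv (fun y'' => w x y'') y') y
          + (w x y ^ β₂ + w x y) / (l₇ * x)) :
    ∀ t, 0 < t → ∀ r, 0 < r →
      r ^ (-n) * deriv (fun t' => vbar t' * w (τ t') (φfun r)) t
        = r ^ (1 - N) *
            deriv (fun ρ => ρ ^ (n₁ + N - 1) * (vbar t * w (τ t) (φfun ρ)) ^ (m₂ - 1) *
              |deriv (fun σ => (vbar t * w (τ t) (φfun σ)) ^ k₂) ρ| ^ (p - 2) *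
              deriv (fun σ => vbar t * w (τ t) (φfun σ)) ρ) r
          + (1 - q) * r ^ (-n) * t ^ l * (vbar t * w (τ t) (φfun r)) ^ β₂ := by
  intro t ht r hr
  have hq : 0 < 1 - q := by linarith
  have hb : 1 - β₂ ≠ 0 := by linarith
  have hb' : 0 < β₂ - 1 := by linarith
  have hl' : 0 < 1 + l := by linarith
  have hc : l₅ + 1 - β₂ ≠ 0 := by linarith
  have hp0 : 0 < p := by linarith
  have hpn' : 0 < p - n - n₁ := by linarith
  obtain ⟨a, haa⟩ : ∃ a, a = (p - n - n₁) / p := ⟨_, rfl⟩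
  have ha : 0 < a := by rw [haa]; positivity
  have h2 : a * p = p - n - n₁ := by rw [haa]; field_simp
  have h1 : a * s = N - n := by rw [haa, hs]; field_simp
  have hf : ∀ r, 0 < r → φfun r = r ^ a / a := by
    intro r hr
    rw [hφfun r hr, ← haa, ← h2]; field_simp
  have hfpos : ∀ r, 0 < r → 0 < φfun r := by
    intro r hr; rw [hf r hr]; positivity
  have hB : 0 < (1 - q) * (β₂ - 1) / (1 + l) := by positivity
  have hl₁pos : 0 < l₁ := by rw [hl₁]; positivity
  have hVpos : ∀ t, 0 < t → 0 < vbar t := by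
    intro t ht; rw [hvbar t ht]; positivity
  -- spatial part
  have hspace : ∀ x, 0 < x → ∀ V, 0 < V →
      r ^ (1 - N) *
            deriv (fun ρ => ρ ^ (n₁ + N - 1) * (V * w x (φfun ρ)) ^ (m₂ - 1) *
              |deriv (fun σ => (V * w x (φfun σ)) ^ k₂) ρ| ^ (p - 2) *
              deriv (fun σ => V * w x (φfun σ)) ρ) r
      = r ^ (-n) * V * V ^ (m₂ + k₂ * (p - 2) - 1) * (φfun r ^ (1 - s) *
            deriv (fun y' => y' ^ (s - 1) * w x y' ^ (m₂ - 1) *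
              |deriv (fun y'' => w x y'' ^ k₂) y'| ^ (p - 2) *
              deriv (fun y'' => w x y'') y') (φfun r)) := by
    intro x hx V hV
    have hev : (fun ρ => ρ ^ (n₁ + N - 1) * (V * w x (φfun ρ)) ^ (m₂ - 1) *
              |deriv (fun σ => (V * w x (φfun σ)) ^ k₂) ρ| ^ (p - 2) *
              deriv (fun σ => V * w x (φfun σ)) ρ) =ᶠ[𝓝 r]
        (fun ρ => (a ^ (s - 1) * V ^ (m₂ + k₂ * (p - 2) - 1) * V) *
          (fun y' => y' ^ (s - 1) * w x y' ^ (m₂ - 1) *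
              |deriv (fun y'' => w x y'' ^ k₂) y'| ^ (p - 2) *
              deriv (fun y'' => w x y'') y') (φfun ρ)) := by
      filter_upwards [lt_mem_nhds hr] with ρ hρ
      have d1 : deriv (fun σ => (V * w x (φfun σ)) ^ k₂) ρ
          = V ^ k₂ * (deriv (fun y'' => w x y'' ^ k₂) (φfun ρ) * ρ ^ (a - 1)) := by
        rw [← aux_chain (fun y'' => w x y'' ^ k₂) φfun a ha hf ρ hρ, ← deriv_const_mul_field]
        apply Filter.EventuallyEq.deriv_eq
        filter_upwards [lt_mem_nhds hρ] with σ hσ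
        exact Real.mul_rpow hV.le (hwpos x hx _ (hfpos σ hσ)).le
      have d2 : deriv (fun σ => V * w x (φfun σ)) ρ
          = V * (deriv (fun y'' => w x y'') (φfun ρ) * ρ ^ (a - 1)) := by
        rw [← aux_chain (fun y'' => w x y'') φfun a ha hf ρ hρ, ← deriv_const_mul_field]
      rw [d1, d2, aux_flux a s p N n n₁ m₂ k₂ V _ _ _ ρ ha hV (hwpos x hx _ (hfpos ρ hρ)) hρ h1 h2,
        ← hf ρ hρ]
    rw [hev.deriv_eq, deriv_const_mul_field, aux_chain (fun y' => y' ^ (s - 1) * w x y' ^ (m₂ - 1) *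
              |deriv (fun y'' => w x y'' ^ k₂) y'| ^ (p - 2) *
              deriv (fun y'' => w x y'') y') φfun a ha hf r hr]
    have e : r ^ (1 - N) * a ^ (s - 1) * r ^ (a - 1) = r ^ (-n) * φfun r ^ (1 - s) := by
      have e1 : φfun r ^ (1 - s) = r ^ (a * (1 - s)) * a ^ (s - 1) := by
        rw [hf r hr, Real.div_rpow (by positivity) ha.le, ← Real.rpow_mul hr.le, div_eq_mul_inv,
          ← Real.rpow_neg ha.le, neg_sub]
      have e2 : r ^ (1 - N) * r ^ (a - 1) = r ^ (-n) * r ^ (a * (1 - s)) := by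
        rw [← Real.rpow_add hr, ← Real.rpow_add hr]; congr 1; linear_combination h1
      rw [e1]; linear_combination a ^ (s - 1) * e2
    generalize deriv (fun y' => y' ^ (s - 1) * w x y' ^ (m₂ - 1) *
              |deriv (fun y'' => w x y'' ^ k₂) y'| ^ (p - 2) *
              deriv (fun y'' => w x y'') y') (φfun r) = Z
    linear_combination (V * V ^ (m₂ + k₂ * (p - 2) - 1) * Z) * e
  rw [hspace (τ t) (hτpos t ht) (vbar t) (hVpos t ht)]
  -- time part
  have hdV : HasDerivAt vbar ((1 + l) / (1 - β₂) * vbar t / t) t := by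
    have h := (Real.hasDerivAt_rpow_const (x := t) (p := (1 + l) / (1 - β₂))
      (Or.inl ht.ne')).const_mul l₁
    have h' := h.congr_of_eventuallyEq (f₁ := vbar) (by
      filter_upwards [lt_mem_nhds ht] with x hx using hvbar x hx)
    refine HasDerivAt.congr_deriv h' (Eq.symm ?_)
    rw [hvbar t ht, Real.rpow_sub_one ht.ne']; ring
  have hT : vbar t ^ (m₂ + k₂ * (p - 2) - 1) = l₆ * t ^ (l₅ / (1 - β₂)) := by
    rw [hvbar t ht, Real.mul_rpow hl₁pos.le (by positivity), ← hl₆, ← Real.rpow_mul ht.le]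
    congr 2
    rw [hl₅]; ring
  have hexp : (l₅ + 1 - β₂) / (1 - β₂) = l₅ / (1 - β₂) + 1 := by field_simp; ring
  have hdτ : HasDerivAt τ (vbar t ^ (m₂ + k₂ * (p - 2) - 1)) t := by
    have h := ((Real.hasDerivAt_rpow_const (x := t) (p := (l₅ + 1 - β₂) / (1 - β₂))
      (Or.inl ht.ne')).const_mul (l₆ * (1 - β₂))).div_const (l₅ + 1 - β₂)
    have h' := h.congr_of_eventuallyEq (f₁ := τ) (by
      filter_upwards [lt_mem_nhds ht] with x hx using hτ x hx)
    refine HasDerivAt.congr_deriv h' (Eq.symm ?_)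
    rw [hT]
    have : (l₅ + 1 - β₂) / (1 - β₂) - 1 = l₅ / (1 - β₂) := by rw [hexp]; ring
    rw [this]; field_simp
  have hτl : l₇ * τ t = (β₂ - 1) * t * vbar t ^ (m₂ + k₂ * (p - 2) - 1) / (1 + l) := by
    rw [hτ t ht, hT, hexp, Real.rpow_add_one ht.ne', hl₇]; field_simp; ring
  have hVβ : (1 - q) * t ^ l * vbar t ^ β₂ = (1 + l) / (β₂ - 1) * vbar t / t := by
    have g1 : vbar t ^ (β₂ - 1) = (1 + l) / ((1 - q) * (β₂ - 1)) * (t ^ (l + 1))⁻¹ := by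
      rw [hvbar t ht, Real.mul_rpow hl₁pos.le (by positivity), hl₁, ← Real.rpow_mul hB.le,
        ← Real.rpow_mul ht.le, ← Real.rpow_neg ht.le]
      have i1 : 1 / (1 - β₂) * (β₂ - 1) = -1 := by field_simp; ring
      have i2 : (1 + l) / (1 - β₂) * (β₂ - 1) = -(l + 1) := by field_simp; ring
      rw [i1, i2, Real.rpow_neg_one, inv_div]
    have g2 : vbar t ^ β₂ = vbar t ^ (β₂ - 1) * vbar t := by
      rw [← Real.rpow_add_one (hVpos t ht).ne']; congr 1; ring
    have : 0 < t ^ l := by positivity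
    rw [g2, g1, Real.rpow_add_one ht.ne']; field_simp
  have hy := hfpos r hr
  have hx := hτpos t ht
  have hdw : HasDerivAt (fun x => w x (φfun r)) (deriv (fun x => w x (φfun r)) (τ t)) (τ t) :=
    (((hw_τ _ hy).contDiffAt (Ioi_mem_nhds hx)).differentiableAt (by norm_num)).hasDerivAt
  have hdt : deriv (fun t' => vbar t' * w (τ t') (φfun r)) t = _ :=
    (hdV.mul (hdw.comp t hdτ)).deriv
  rw [hdt, hwpde _ hx _ hy, Real.mul_rpow (hVpos t ht).le (hwpos _ hx _ hy).le, hτl]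
  simp only [Function.comp]
  generalize deriv (fun y' => y' ^ (s - 1) * w (τ t) y' ^ (m₂ - 1) *
              |deriv (fun y'' => w (τ t) y'' ^ k₂) y'| ^ (p - 2) *
              deriv (fun y'' => w (τ t) y'') y') (φfun r) = Z
  have hTpos : 0 < vbar t ^ (m₂ + k₂ * (p - 2) - 1) := Real.rpow_pos_of_pos (hVpos t ht) _
  generalize vbar t ^ (m₂ + k₂ * (p - 2) - 1) = T at *
  generalize w (τ t) (φfun r) = W at *
  have k1 : (1 + l) / (1 - β₂) * vbar t / t = -((1 + l) / (β₂ - 1) * vbar t / t) := by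
    rw [← neg_sub β₂ 1, div_neg]; ring
  have k2 : vbar t * ((W ^ β₂ + W) / ((β₂ - 1) * t * T / (1 + l)) * T)
      = (1 + l) / (β₂ - 1) * vbar t / t * (W ^ β₂ + W) := by
    field_simp
  rw [k1]
  linear_combination r ^ (-n) * k2 - r ^ (-n) * W ^ β₂ * hVβ
end

section
/- Assume l₇ ≠ 0. Fix τ > 0 and φ > 0, set ξ = φ τ^{-1/p}, and let f be positive and twice continuously differentiable on a neighborhood of ξ in (0,∞). Then the function w(τ,φ) := f(φ τ^{-1/p}) satisfies ∂_τ w = φ^{1-s} ∂_φ( φ^{s-1} w^{m₂-1} |∂_φ(w^{k₂})|^{p-2} ∂_φ w ) + (w^{β₂} + w)/(l₇ τ) at the point (τ,φ) if and only if (Af)(ξ) = 0, where A is the self-similar operator. -/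
open Real Set Filter Topology

/-- The self-similar operator
`(Af)(ξ) = ξ^{1-s} (ξ^{s-1} f^{m₂-1} |(f^{k₂})'|^{p-2} f')' + (ξ/p) f' + (f + f^{β₂})/l₇`. -/
noncomputable def selfSimOp (p m₂ k₂ β₂ s l₇ : ℝ) (f : ℝ → ℝ) (ξ : ℝ) : ℝ :=
  ξ ^ (1 - s) *
      deriv (fun x => x ^ (s - 1) * f x ^ (m₂ - 1) *
        |deriv (fun y => f y ^ k₂) x| ^ (p - 2) * deriv f x) ξ
    + (ξ / p) * deriv f ξ + (f ξ + f ξ ^ β₂) / l₇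

theorem aux_deriv_mul_right (c : ℝ) (g : ℝ → ℝ) (x : ℝ) :
    deriv (fun y => g (y * c)) x = c • deriv g (x * c) := by
  have h := deriv_comp_mul_left c g x
  simp only [mul_comm c] at h
  exact h

/-- For `w(τ,φ) = f(φ τ^{-1/p})`, the equation
`∂_τ w = φ^{1-s} ∂_φ(φ^{s-1} w^{m₂-1} |∂_φ(w^{k₂})|^{p-2} ∂_φ w) + (w^{β₂}+w)/(l₇ τ)`
holds at `(τ,φ)` iff `(Af)(ξ) = 0` at `ξ = φ τ^{-1/p}`. -/
theorem stmt4
    (p q k m N n n₁ l β : ℝ)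
    (hp : 2 ≤ p) (hq0 : 0 < q) (hq1 : q < 1) (hk : 1 ≤ k) (hm : 1 ≤ m)
    (hn0 : 0 ≤ n) (hnN : n < N) (hpn : n + n₁ < p)
    (m₂ k₂ β₂ s l₅ l₇ : ℝ)
    (hm₂ : m₂ = m / (1 - q)) (hk₂ : k₂ = k / (1 - q))
    (hβ₂ : β₂ = (β - q) / (1 - q))
    (hs : s = p * (N - n) / (p - n - n₁))
    (hl₅ : l₅ = (1 + l) * (m₂ + k₂ * (p - 2) - 1))
    (hl₇def : l₇ = -(l₅ + 1 - β₂) / (1 + l))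
    (hl₇ : l₇ ≠ 0)
    (τ φ : ℝ) (hτ : 0 < τ) (hφ : 0 < φ)
    (ξ : ℝ) (hξ : ξ = φ * τ ^ (-1 / p))
    (f : ℝ → ℝ) (U : Set ℝ)
    (hU : U ∈ 𝓝 ξ) (hUsub : U ⊆ Ioi 0)
    (hf : ContDiffOn ℝ 2 f U) (hfpos : ∀ x ∈ U, 0 < f x) :
    (deriv (fun x => f (φ * x ^ (-1 / p))) τ
      = φ ^ (1 - s) *
          deriv (fun y => y ^ (s - 1) * f (y * τ ^ (-1 / p)) ^ (m₂ - 1) *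
            |deriv (fun y' => f (y' * τ ^ (-1 / p)) ^ k₂) y| ^ (p - 2) *
            deriv (fun y' => f (y' * τ ^ (-1 / p))) y) φ
        + (f (φ * τ ^ (-1 / p)) ^ β₂ + f (φ * τ ^ (-1 / p))) / (l₇ * τ))
    ↔ selfSimOp p m₂ k₂ β₂ s l₇ f ξ = 0 := by
  have hp0 : p ≠ 0 := by linarith
  have hc : 0 < τ ^ (-1 / p) := rpow_pos_of_pos hτ _
  have hcp : (τ ^ (-1 / p)) ^ p = τ⁻¹ := by
    rw [← rpow_mul hτ.le, div_mul_cancel₀ _ hp0, rpow_neg_one]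
  have hξ0 : 0 < ξ := by rw [hξ]; positivity
  have hdf : DifferentiableAt ℝ f ξ :=
    ((hf.contDiffAt hU).differentiableAt (by norm_num))
  have hL : deriv (fun x => f (φ * x ^ (-1 / p))) τ = -(ξ / p * deriv f ξ) / τ := by
    have h1 : HasDerivAt (fun x : ℝ => φ * x ^ (-1 / p)) (φ * ((-1 / p) * τ ^ (-1 / p - 1))) τ :=
      (hasDerivAt_rpow_const (Or.inl hτ.ne')).const_mul φ
    have h2 : HasDerivAt f (deriv f ξ) (φ * τ ^ (-1 / p)) := by
      rw [← hξ]; exact hdf.hasDerivAt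
    have h3 := (h2.comp τ h1).deriv
    have h4 : deriv (fun x => f (φ * x ^ (-1 / p))) τ
        = deriv f ξ * (φ * ((-1 / p) * τ ^ (-1 / p - 1))) := h3
    rw [h4, rpow_sub_one hτ.ne', hξ]
    field_simp
  rw [hL]
  unfold selfSimOp
  rw [← hξ]
  generalize hcd : τ ^ (-1 / p) = c at *
  set G : ℝ → ℝ := fun x => x ^ (s - 1) * f x ^ (m₂ - 1) *
        |deriv (fun y => f y ^ k₂) x| ^ (p - 2) * deriv f x with hG
  have hR : deriv (fun y => y ^ (s - 1) * f (y * c) ^ (m₂ - 1) *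
            |deriv (fun y' => f (y' * c) ^ k₂) y| ^ (p - 2) *
            deriv (fun y' => f (y' * c)) y) φ = c ^ (p - s) * (c * deriv G ξ) := by
    have he : (fun y => y ^ (s - 1) * f (y * c) ^ (m₂ - 1) *
            |deriv (fun y' => f (y' * c) ^ k₂) y| ^ (p - 2) *
            deriv (fun y' => f (y' * c)) y) =ᶠ[𝓝 φ] fun y => c ^ (p - s) * G (y * c) := by
      filter_upwards [lt_mem_nhds hφ] with y hy
      have e1 : deriv (fun y' => f (y' * c) ^ k₂) y
          = c * deriv (fun y => f y ^ k₂) (y * c) := by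
        have := aux_deriv_mul_right c (fun y => f y ^ k₂) y
        simpa using this
      have e2 : deriv (fun y' => f (y' * c)) y = c * deriv f (y * c) := by
        have := aux_deriv_mul_right c f y
        simpa using this
      have e3 : c ^ (p - s) * c ^ (s - 1) = c ^ (p - 2) * c := by
        rw [← rpow_add hc, ← rpow_add_one hc.ne']
        congr 1; ring
      simp only [hG]
      rw [e1, e2, abs_mul, abs_of_pos hc, mul_rpow hc.le (abs_nonneg _), mul_rpow hy.le hc.le]
      linear_combination (-(y ^ (s - 1) * f (y * c) ^ (m₂ - 1) *
        |deriv (fun y => f y ^ k₂) (y * c)| ^ (p - 2) * deriv f (y * c))) * e3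
    rw [he.deriv_eq, deriv_const_mul_field]
    have := aux_deriv_mul_right c G φ
    rw [this, ← hξ, smul_eq_mul]
  rw [hR]
  have h5 : φ ^ (1 - s) * (c ^ (p - s) * (c * deriv G ξ)) = ξ ^ (1 - s) * deriv G ξ / τ := by
    have e4 : c ^ (p - s) * c = c ^ (1 - s) * τ⁻¹ := by
      rw [← hcp, ← rpow_add hc, ← rpow_add_one hc.ne']
      congr 1; ring
    rw [hξ, mul_rpow hφ.le hc.le, div_eq_mul_inv, ← hξ]
    linear_combination (φ ^ (1 - s) * deriv G ξ) * e4
  rw [h5]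
  have h6 : (f ξ ^ β₂ + f ξ) / (l₇ * τ) = (f ξ + f ξ ^ β₂) / l₇ / τ := by
    rw [div_div, add_comm]
  rw [h6, ← add_div, div_left_inj' hτ.ne']
  constructor <;> intro h <;> linarith
end

section
/- Assume m₂ + k₂(p-2) > 1 (so γ₂ > 0) and l₇ ≠ 0. Let a > 0, b = [p (γ₁γ₂)^{p-1} k₂^{p-2}]^{-1/(p-1)} (so that (bγ₁γ₂)^{p-1} k₂^{p-2} = 1/p), ξ_b = (a/b)^{1/γ₁}, and f̄(ξ) = (a - b ξ^{γ₁})^{γ₂}. Then for every ξ ∈ (0, ξ_b): (A f̄)(ξ) = (a - b ξ^{γ₁})^{γ₂} · [ 1/l₇ - s/p + (a - b ξ^{γ₁})^{γ₂(β₂-1)}/l₇ ]. -/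
open Real Set Filter Topology

/-- On `(0, ξ_b)` the ZKB profile `f̄(ξ) = (a - b ξ^{γ₁})^{γ₂}` satisfies
`(A f̄)(ξ) = (a - b ξ^{γ₁})^{γ₂} [1/l₇ - s/p + (a - b ξ^{γ₁})^{γ₂(β₂-1)}/l₇]`. -/
theorem stmt5
    (p q k m N n n₁ l β : ℝ)
    (hp : 2 ≤ p) (hq0 : 0 < q) (hq1 : q < 1) (hk : 1 ≤ k) (hm : 1 ≤ m)
    (hn0 : 0 ≤ n) (hnN : n < N) (hpn : n + n₁ < p)
    (m₂ k₂ β₂ s l₅ l₇ γ₁ γ₂ : ℝ)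
    (hm₂ : m₂ = m / (1 - q)) (hk₂ : k₂ = k / (1 - q))
    (hβ₂ : β₂ = (β - q) / (1 - q))
    (hs : s = p * (N - n) / (p - n - n₁))
    (hl₅ : l₅ = (1 + l) * (m₂ + k₂ * (p - 2) - 1))
    (hl₇def : l₇ = -(l₅ + 1 - β₂) / (1 + l))
    (hγ₁ : γ₁ = p / (p - 1)) (hγ₂ : γ₂ = (p - 1) / (m₂ + k₂ * (p - 2) - 1))
    (hslow : 1 < m₂ + k₂ * (p - 2)) (hl₇ : l₇ ≠ 0)
    (a b ξb : ℝ) (ha : 0 < a)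
    (hb : b = (p * (γ₁ * γ₂) ^ (p - 1) * k₂ ^ (p - 2)) ^ (-1 / (p - 1)))
    (hξb : ξb = (a / b) ^ (1 / γ₁)) :
    ∀ ξ ∈ Ioo (0 : ℝ) ξb,
      selfSimOp p m₂ k₂ β₂ s l₇ (fun x => (a - b * x ^ γ₁) ^ γ₂) ξ
        = (a - b * ξ ^ γ₁) ^ γ₂ *
            (1 / l₇ - s / p + (a - b * ξ ^ γ₁) ^ (γ₂ * (β₂ - 1)) / l₇) := by
  intro ξ hξ
  have hp1 : 0 < p - 1 := by linarith
  have hp0 : 0 < p := by linarith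
  have hk0 : 0 < k₂ := by
    rw [hk₂]; exact div_pos (by linarith) (by linarith)
  have hd : 0 < m₂ + k₂ * (p - 2) - 1 := by linarith
  have hg1 : 0 < γ₁ := by rw [hγ₁]; positivity
  have hg2 : 0 < γ₂ := by rw [hγ₂]; positivity
  have hB : 0 < p * (γ₁ * γ₂) ^ (p - 1) * k₂ ^ (p - 2) := by positivity
  have hb0 : 0 < b := by rw [hb]; positivity
  have hbp : b ^ (p - 1) * (p * (γ₁ * γ₂) ^ (p - 1) * k₂ ^ (p - 2)) = 1 := by
    rw [hb, ← Real.rpow_mul hB.le]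
    have : -1 / (p - 1) * (p - 1) = -1 := by field_simp
    rw [this, Real.rpow_neg_one]
    exact inv_mul_cancel₀ hB.ne'
  have hg1p : (γ₁ - 1) * (p - 1) = 1 := by rw [hγ₁]; field_simp; ring
  have hg2p : γ₂ * (m₂ + k₂ * (p - 2) - 1) = p - 1 := by rw [hγ₂]; field_simp
  have hpos : ∀ x ∈ Ioo (0 : ℝ) ξb, 0 < a - b * x ^ γ₁ := by
    intro x hx
    have h1 : x ^ γ₁ < ξb ^ γ₁ := Real.rpow_lt_rpow hx.1.le hx.2 hg1
    have h2 : ξb ^ γ₁ = a / b := by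
      rw [hξb, ← Real.rpow_mul (by positivity)]
      rw [one_div_mul_cancel hg1.ne', Real.rpow_one]
    rw [h2, lt_div_iff₀ hb0] at h1
    linarith
  have hder : ∀ r : ℝ, ∀ x ∈ Ioo (0 : ℝ) ξb,
      HasDerivAt (fun y => (a - b * y ^ γ₁) ^ r)
        (-(b * γ₁ * r * x ^ (γ₁ - 1) * (a - b * x ^ γ₁) ^ (r - 1))) x := by
    intro r x hx
    have h1 : HasDerivAt (fun y : ℝ => y ^ γ₁) (γ₁ * x ^ (γ₁ - 1)) x :=
      Real.hasDerivAt_rpow_const (Or.inl hx.1.ne')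
    have h2 := ((h1.const_mul b).const_sub a).rpow_const (p := r) (Or.inl (hpos x hx).ne')
    convert h2 using 1
    ring
  have hev : ∀ x ∈ Ioo (0 : ℝ) ξb, ∀ᶠ y in 𝓝 x, y ∈ Ioo (0 : ℝ) ξb :=
    fun x hx => isOpen_Ioo.mem_nhds hx
  have hderk : ∀ x ∈ Ioo (0 : ℝ) ξb,
      deriv (fun y => ((a - b * y ^ γ₁) ^ γ₂) ^ k₂) x =
        -(b * γ₁ * (γ₂ * k₂) * x ^ (γ₁ - 1) * (a - b * x ^ γ₁) ^ (γ₂ * k₂ - 1)) := by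
    intro x hx
    rw [← (hder (γ₂ * k₂) x hx).deriv]
    apply Filter.EventuallyEq.deriv_eq
    filter_upwards [hev x hx] with y hy
    rw [Real.rpow_mul (hpos y hy).le]
  have hflux : ∀ x ∈ Ioo (0 : ℝ) ξb,
      x ^ (s - 1) * ((a - b * x ^ γ₁) ^ γ₂) ^ (m₂ - 1) *
        |deriv (fun y => ((a - b * y ^ γ₁) ^ γ₂) ^ k₂) x| ^ (p - 2) *
          deriv (fun x => (a - b * x ^ γ₁) ^ γ₂) x
      = -(1 / p) * (x ^ s * (a - b * x ^ γ₁) ^ γ₂) := by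
    intro x hx
    rw [hderk x hx, (hder γ₂ x hx).deriv]
    have hh := hpos x hx
    have hx0 := hx.1
    generalize a - b * x ^ γ₁ = h at hh
    have e0 : b * γ₁ * (γ₂ * k₂) * x ^ (γ₁ - 1) * h ^ (γ₂ * k₂ - 1)
        = (b * (γ₁ * γ₂)) * k₂ * x ^ (γ₁ - 1) * h ^ (γ₂ * k₂ - 1) := by ring
    rw [abs_neg, e0, abs_of_pos (by positivity), Real.mul_rpow (by positivity) (by positivity),
      Real.mul_rpow (by positivity) (by positivity), Real.mul_rpow (by positivity) (by positivity),
      ← Real.rpow_mul hx0.le, ← Real.rpow_mul hh.le, ← Real.rpow_mul hh.le]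
    have ex : x ^ s = x ^ (s - 1) * x ^ ((γ₁ - 1) * (p - 2)) * x ^ (γ₁ - 1) := by
      rw [← Real.rpow_add hx0, ← Real.rpow_add hx0]
      congr 1
      linear_combination -hg1p
    have eh : h ^ γ₂ = h ^ (γ₂ * (m₂ - 1)) * h ^ ((γ₂ * k₂ - 1) * (p - 2)) * h ^ (γ₂ - 1) := by
      rw [← Real.rpow_add hh, ← Real.rpow_add hh]
      congr 1
      linear_combination -hg2p
    have ec : (b * (γ₁ * γ₂)) ^ (p - 2) * (b * (γ₁ * γ₂)) * k₂ ^ (p - 2) = 1 / p := by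
      have hc : 0 < b * (γ₁ * γ₂) := by positivity
      have e1 : (b * (γ₁ * γ₂)) ^ (p - 2) * (b * (γ₁ * γ₂)) = (b * (γ₁ * γ₂)) ^ (p - 1) := by
        rw [← Real.rpow_add_one hc.ne']
        congr 1
        ring
      rw [e1, Real.mul_rpow hb0.le (by positivity), eq_div_iff hp0.ne']
      linear_combination hbp
    rw [ex, eh, ← ec]
    ring
  have hfd := hder γ₂ ξ hξ
  have hfl : deriv (fun x => x ^ (s - 1) * ((a - b * x ^ γ₁) ^ γ₂) ^ (m₂ - 1) *
        |deriv (fun y => ((a - b * y ^ γ₁) ^ γ₂) ^ k₂) x| ^ (p - 2) *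
          deriv (fun x => (a - b * x ^ γ₁) ^ γ₂) x) ξ
      = -(1 / p) * (s * ξ ^ (s - 1) * (a - b * ξ ^ γ₁) ^ γ₂
          + ξ ^ s * deriv (fun x => (a - b * x ^ γ₁) ^ γ₂) ξ) := by
    have h1 : HasDerivAt (fun y : ℝ => y ^ s) (s * ξ ^ (s - 1)) ξ :=
      Real.hasDerivAt_rpow_const (Or.inl hξ.1.ne')
    have h2 := (h1.mul hfd).const_mul (-(1 / p))
    rw [hfd.deriv, ← h2.deriv]
    apply Filter.EventuallyEq.deriv_eq
    filter_upwards [hev ξ hξ] with y hy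
    exact hflux y hy
  unfold selfSimOp
  simp only []
  rw [hfl]
  have hh := hpos ξ hξ
  have hx0 := hξ.1
  generalize deriv (fun x => (a - b * x ^ γ₁) ^ γ₂) ξ = D
  generalize a - b * ξ ^ γ₁ = h at hh
  have e1 : ξ ^ (1 - s) * ξ ^ (s - 1) = 1 := by
    rw [← Real.rpow_add hx0]; simp
  have e2 : ξ ^ (1 - s) * ξ ^ s = ξ := by
    rw [← Real.rpow_add hx0]; simp
  have e3 : (h ^ γ₂) ^ β₂ = h ^ γ₂ * h ^ (γ₂ * (β₂ - 1)) := by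
    rw [← Real.rpow_mul hh.le, ← Real.rpow_add hh]
    congr 1
    ring
  rw [e3]
  linear_combination (-(1 / p) * s * h ^ γ₂) * e1 + (-(1 / p) * D) * e2
end

section
/- Assume m₂ + k₂(p-2) > 1 (so γ₂ > 0). Let a > 0, b = [p (γ₁γ₂)^{p-1} k₂^{p-2}]^{-1/(p-1)}, ξ_b = (a/b)^{1/γ₁}, and f̄(ξ) = (a - b ξ^{γ₁})^{γ₂}. (i) If l₇ > 0, γ₂(β₂-1) ≥ 0 and s/p ≥ (1 + a^{γ₂(β₂-1)})/l₇, then (A f̄)(ξ) ≤ 0 for all ξ ∈ (0, ξ_b). (ii) If l₇ < 0, then (A f̄)(ξ) ≤ 0 for all ξ ∈ (0, ξ_b). -/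
open Real Set Filter Topology

/-- derivative of the profile power -/
theorem profile_deriv (a b g c x : ℝ) (hx : 0 < x) (hu : 0 < a - b * x ^ g) :
    HasDerivAt (fun y : ℝ => (a - b * y ^ g) ^ c)
      (-(c * b * g * x ^ (g - 1) * (a - b * x ^ g) ^ (c - 1))) x := by
  have h1 : HasDerivAt (fun y : ℝ => y ^ g) (g * x ^ (g - 1)) x :=
    Real.hasDerivAt_rpow_const (Or.inl hx.ne')
  have h2 : HasDerivAt (fun y : ℝ => a - b * y ^ g) (-(b * (g * x ^ (g - 1)))) x :=
    (h1.const_mul b).const_sub a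
  have h3 := h2.rpow_const (p := c) (Or.inl hu.ne')
  convert h3 using 1
  ring

theorem selfSim_eq (p m k B s L a b g c ξ : ℝ) (hp : 2 ≤ p) (hk : 0 < k) (hb : 0 < b)
    (hg : 0 < g) (hc : 0 < c) (hg1 : (g - 1) * (p - 1) = 1)
    (hc1 : c * (m + k * (p - 2) - 1) = p - 1)
    (hC : k ^ (p - 2) * (b * g * c) ^ (p - 1) = 1 / p)
    (hξ : 0 < ξ) (hu : 0 < a - b * ξ ^ g) :
    selfSimOp p m k B s L (fun x => (a - b * x ^ g) ^ c) ξ =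
      -(s / p) * (a - b * ξ ^ g) ^ c
        + ((a - b * ξ ^ g) ^ c + ((a - b * ξ ^ g) ^ c) ^ B) / L := by
  have hev : ∀ᶠ x in 𝓝 ξ, 0 < x ∧ 0 < a - b * x ^ g := by
    have hcont : ContinuousAt (fun x : ℝ => a - b * x ^ g) ξ :=
      continuousAt_const.sub (continuousAt_const.mul
        (Real.continuousAt_rpow_const _ _ (Or.inl hξ.ne')))
    exact (lt_mem_nhds hξ).and (hcont.eventually (lt_mem_nhds hu))
  have hD : ∀ x, 0 < x → 0 < a - b * x ^ g →
      x ^ (s - 1) * ((a - b * x ^ g) ^ c) ^ (m - 1) *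
        |deriv (fun y : ℝ => ((a - b * y ^ g) ^ c) ^ k) x| ^ (p - 2) *
          deriv (fun y : ℝ => (a - b * y ^ g) ^ c) x
      = -(1 / p) * (x ^ s * (a - b * x ^ g) ^ c) := by
    intro x hx hux
    have e1 : deriv (fun y : ℝ => ((a - b * y ^ g) ^ c) ^ k) x
        = -(c * k * b * g * x ^ (g - 1) * (a - b * x ^ g) ^ (c * k - 1)) := by
      rw [← (profile_deriv a b g (c * k) x hx hux).deriv]
      apply Filter.EventuallyEq.deriv_eq
      have hcont : ContinuousAt (fun x : ℝ => a - b * x ^ g) x :=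
        continuousAt_const.sub (continuousAt_const.mul
          (Real.continuousAt_rpow_const _ _ (Or.inl hx.ne')))
      filter_upwards [hcont.eventually (lt_mem_nhds hux)] with y hy
      exact (Real.rpow_mul (le_of_lt hy) c k).symm
    rw [e1, (profile_deriv a b g c x hx hux).deriv, abs_neg, abs_of_pos (by positivity)]
    set u := a - b * x ^ g with hudef
    have e2 : (c * k * b * g * x ^ (g - 1) * u ^ (c * k - 1)) ^ (p - 2)
        = k ^ (p - 2) * (b * g * c) ^ (p - 2) * x ^ ((g - 1) * (p - 2))
          * u ^ ((c * k - 1) * (p - 2)) := by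
      rw [show c * k * b * g * x ^ (g - 1) * u ^ (c * k - 1)
        = k * (b * g * c) * x ^ (g - 1) * u ^ (c * k - 1) by ring]
      rw [Real.mul_rpow (by positivity) (by positivity),
        Real.mul_rpow (by positivity) (by positivity),
        Real.mul_rpow (by positivity) (by positivity),
        ← Real.rpow_mul hx.le, ← Real.rpow_mul hux.le]
    have e3 : (b * g * c) ^ (p - 1) = (b * g * c) ^ (p - 2) * (b * g * c) := by
      rw [← Real.rpow_add_one (by positivity)]; congr 1; ring
    have e4 : x ^ s = x ^ (s - 1) * x ^ ((g - 1) * (p - 2)) * x ^ (g - 1) := by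
      rw [← Real.rpow_add hx, ← Real.rpow_add hx]; congr 1; linarith
    have e5 : u ^ c = u ^ (c * (m - 1)) * u ^ ((c * k - 1) * (p - 2)) * u ^ (c - 1) := by
      rw [← Real.rpow_add hux, ← Real.rpow_add hux]; congr 1; linarith
    rw [e2, ← Real.rpow_mul hux.le, ← hC, e3, e4, e5]
    ring
  have hE : deriv (fun x => x ^ (s - 1) * ((a - b * x ^ g) ^ c) ^ (m - 1) *
        |deriv (fun y : ℝ => ((a - b * y ^ g) ^ c) ^ k) x| ^ (p - 2) *
          deriv (fun y : ℝ => (a - b * y ^ g) ^ c) x) ξ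
      = deriv (fun x => -(1 / p) * (x ^ s * (a - b * x ^ g) ^ c)) ξ := by
    apply Filter.EventuallyEq.deriv_eq
    filter_upwards [hev] with x hx
    exact hD x hx.1 hx.2
  have hf := profile_deriv a b g c ξ hξ hu
  have hx1 : HasDerivAt (fun y : ℝ => y ^ s) (s * ξ ^ (s - 1)) ξ :=
    Real.hasDerivAt_rpow_const (Or.inl hξ.ne')
  have hF := ((hx1.mul hf).const_mul (-(1 / p))).deriv
  unfold selfSimOp
  simp only []
  rw [hE]
  erw [hF]
  rw [hf.deriv]
  have r1 : ξ ^ (1 - s) * ξ ^ (s - 1) = 1 := by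
    rw [← Real.rpow_add hξ]; simp
  have r2 : ξ ^ (1 - s) * ξ ^ s = ξ := by
    rw [← Real.rpow_add hξ]; simp
  set u := a - b * ξ ^ g
  set D := -(c * b * g * ξ ^ (g - 1) * u ^ (c - 1))
  linear_combination (-(1 / p) * s * u ^ c) * r1 + (-(1 / p) * D) * r2

/-- The ZKB profile `f̄(ξ) = (a - b ξ^{γ₁})^{γ₂}` is a supersolution: `(A f̄)(ξ) ≤ 0` on
`(0, ξ_b)`, (i) when `l₇ > 0`, `γ₂(β₂-1) ≥ 0` and `s/p ≥ (1 + a^{γ₂(β₂-1)})/l₇`, and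
(ii) when `l₇ < 0`. -/
theorem stmt6
    (p q k m N n n₁ l β : ℝ)
    (hp : 2 ≤ p) (hq0 : 0 < q) (hq1 : q < 1) (hk : 1 ≤ k) (hm : 1 ≤ m)
    (hn0 : 0 ≤ n) (hnN : n < N) (hpn : n + n₁ < p)
    (m₂ k₂ β₂ s l₅ l₇ γ₁ γ₂ : ℝ)
    (hm₂ : m₂ = m / (1 - q)) (hk₂ : k₂ = k / (1 - q))
    (hβ₂ : β₂ = (β - q) / (1 - q))
    (hs : s = p * (N - n) / (p - n - n₁))
    (hl₅ : l₅ = (1 + l) * (m₂ + k₂ * (p - 2) - 1))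
    (hl₇def : l₇ = -(l₅ + 1 - β₂) / (1 + l))
    (hγ₁ : γ₁ = p / (p - 1)) (hγ₂ : γ₂ = (p - 1) / (m₂ + k₂ * (p - 2) - 1))
    (hslow : 1 < m₂ + k₂ * (p - 2))
    (a b ξb : ℝ) (ha : 0 < a)
    (hb : b = (p * (γ₁ * γ₂) ^ (p - 1) * k₂ ^ (p - 2)) ^ (-1 / (p - 1)))
    (hξb : ξb = (a / b) ^ (1 / γ₁)) :
    (0 < l₇ → 0 ≤ γ₂ * (β₂ - 1) → (1 + a ^ (γ₂ * (β₂ - 1))) / l₇ ≤ s / p →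
      ∀ ξ ∈ Ioo (0 : ℝ) ξb,
        selfSimOp p m₂ k₂ β₂ s l₇ (fun x => (a - b * x ^ γ₁) ^ γ₂) ξ ≤ 0) ∧
    (l₇ < 0 →
      ∀ ξ ∈ Ioo (0 : ℝ) ξb,
        selfSimOp p m₂ k₂ β₂ s l₇ (fun x => (a - b * x ^ γ₁) ^ γ₂) ξ ≤ 0) := by
  have hq : 0 < 1 - q := by linarith
  have hk2 : 0 < k₂ := by rw [hk₂]; positivity
  have hp1 : 0 < p - 1 := by linarith
  have hp0 : 0 < p := by linarith
  have hM : 0 < m₂ + k₂ * (p - 2) - 1 := by linarith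
  have hg : 0 < γ₁ := by rw [hγ₁]; positivity
  have hc : 0 < γ₂ := by rw [hγ₂]; positivity
  have hs0 : 0 < s := by
    rw [hs]; exact div_pos (mul_pos hp0 (by linarith)) (by linarith)
  have hX : 0 < p * (γ₁ * γ₂) ^ (p - 1) * k₂ ^ (p - 2) := by positivity
  have hb0 : 0 < b := by rw [hb]; positivity
  have hg1 : (γ₁ - 1) * (p - 1) = 1 := by rw [hγ₁]; field_simp; ring
  have hc1 : γ₂ * (m₂ + k₂ * (p - 2) - 1) = p - 1 := by
    rw [hγ₂]; exact div_mul_cancel₀ _ hM.ne'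
  have hbp : b ^ (p - 1) = (p * (γ₁ * γ₂) ^ (p - 1) * k₂ ^ (p - 2))⁻¹ := by
    rw [hb, ← Real.rpow_mul hX.le, div_mul_cancel₀ _ hp1.ne', Real.rpow_neg_one]
  have hC : k₂ ^ (p - 2) * (b * γ₁ * γ₂) ^ (p - 1) = 1 / p := by
    rw [mul_assoc b, Real.mul_rpow hb0.le (by positivity), hbp]
    have h1 : (γ₁ * γ₂) ^ (p - 1) ≠ 0 := by positivity
    have h2 : k₂ ^ (p - 2) ≠ 0 := by positivity
    field_simp
  have hu : ∀ ξ ∈ Ioo (0 : ℝ) ξb, 0 < a - b * ξ ^ γ₁ := by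
    intro ξ hξ
    have h1 : ξ ^ γ₁ < ξb ^ γ₁ := Real.rpow_lt_rpow hξ.1.le hξ.2 hg
    rw [hξb, ← Real.rpow_mul (by positivity), one_div_mul_cancel hg.ne', Real.rpow_one,
      lt_div_iff₀ hb0] at h1
    linarith
  constructor
  · intro hl hβ hcond ξ hξ
    have hux := hu ξ hξ
    rw [selfSim_eq p m₂ k₂ β₂ s l₇ a b γ₁ γ₂ ξ hp hk2 hb0 hg hc hg1 hc1 hC hξ.1 hux]
    have hua : a - b * ξ ^ γ₁ ≤ a := by
      have : 0 < ξ ^ γ₁ := Real.rpow_pos_of_pos hξ.1 _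
      nlinarith
    set u := a - b * ξ ^ γ₁
    have h1 : (u ^ γ₂) ^ β₂ = u ^ γ₂ * u ^ (γ₂ * (β₂ - 1)) := by
      rw [← Real.rpow_mul hux.le, ← Real.rpow_add hux]; congr 1; ring
    have h2 : u ^ (γ₂ * (β₂ - 1)) ≤ a ^ (γ₂ * (β₂ - 1)) := Real.rpow_le_rpow hux.le hua hβ
    have h3 : 0 < u ^ γ₂ := Real.rpow_pos_of_pos hux _
    have h4 : (1 + u ^ (γ₂ * (β₂ - 1))) / l₇ ≤ s / p :=
      le_trans (by gcongr) hcond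
    rw [h1]
    have h5 : -(s / p) * u ^ γ₂ + (u ^ γ₂ + u ^ γ₂ * u ^ (γ₂ * (β₂ - 1))) / l₇
      = u ^ γ₂ * ((1 + u ^ (γ₂ * (β₂ - 1))) / l₇ - s / p) := by ring
    rw [h5]
    exact mul_nonpos_of_nonneg_of_nonpos h3.le (by linarith)
  · intro hl ξ hξ
    have hux := hu ξ hξ
    rw [selfSim_eq p m₂ k₂ β₂ s l₇ a b γ₁ γ₂ ξ hp hk2 hb0 hg hc hg1 hc1 hC hξ.1 hux]
    set u := a - b * ξ ^ γ₁
    have h3 : 0 < u ^ γ₂ := Real.rpow_pos_of_pos hux _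
    have h4 : 0 < (u ^ γ₂) ^ β₂ := Real.rpow_pos_of_pos h3 _
    have h5 : (u ^ γ₂ + (u ^ γ₂) ^ β₂) / l₇ ≤ 0 :=
      div_nonpos_of_nonneg_of_nonpos (by positivity) hl.le
    have h6 : 0 < s / p * u ^ γ₂ := by positivity
    linarith
end

section
/- Assume l > -1, N > n, p > n + n₁, and β₂ > l₅ + 1 (so that l₇ > 0). Then the inequality 1/l₇ - s/p ≤ 0 holds if and only if β₂ ≥ β₂c, where β₂c := 1 + (1+l)·[ m₂ + k₂(p-2) + (p - n₁ - N)/(N - n) ] is the critical Fujita exponent. -/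
open Real Set Filter Topology

/-- Critical Fujita exponent: under `l > -1`, `N > n`, `p > n + n₁` and `β₂ > l₅ + 1`
(so `l₇ > 0`), the inequality `1/l₇ - s/p ≤ 0` holds iff `β₂ ≥ β₂c`, where
`β₂c = 1 + (1+l)[m₂ + k₂(p-2) + (p - n₁ - N)/(N - n)]`. -/
theorem stmt7
    (p q k m N n n₁ l β : ℝ)
    (hp : 2 ≤ p) (hq0 : 0 < q) (hq1 : q < 1) (hk : 1 ≤ k) (hm : 1 ≤ m)
    (hn0 : 0 ≤ n) (hnN : n < N) (hpn : n + n₁ < p)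
    (m₂ k₂ β₂ s l₅ l₇ : ℝ)
    (hm₂ : m₂ = m / (1 - q)) (hk₂ : k₂ = k / (1 - q))
    (hβ₂ : β₂ = (β - q) / (1 - q))
    (hs : s = p * (N - n) / (p - n - n₁))
    (hl₅ : l₅ = (1 + l) * (m₂ + k₂ * (p - 2) - 1))
    (hl₇def : l₇ = -(l₅ + 1 - β₂) / (1 + l))
    (hl : -1 < l) (hβ₂l₅ : l₅ + 1 < β₂)
    (β₂c : ℝ)
    (hβ₂c : β₂c = 1 + (1 + l) * (m₂ + k₂ * (p - 2) + (p - n₁ - N) / (N - n))) :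
    1 / l₇ - s / p ≤ 0 ↔ β₂c ≤ β₂ := by
  have h1 : 0 < 1 + l := by linarith
  have h2 : 0 < N - n := by linarith
  have h3 : 0 < p - n - n₁ := by linarith
  have h4 : 0 < β₂ - l₅ - 1 := by linarith
  have h5 : 0 < p := by linarith
  have e1 : 1 / l₇ = (1 + l) / (β₂ - l₅ - 1) := by
    rw [hl₇def, one_div_div]
    congr 1
    ring
  have e2 : s / p = (N - n) / (p - n - n₁) := by
    rw [hs]
    field_simp
  have e3 : β₂c = l₅ + 1 + (1 + l) * (p - n - n₁) / (N - n) := by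
    rw [hβ₂c, hl₅]
    field_simp
    ring
  have e4 : β₂c ≤ β₂ ↔ (1 + l) * (p - n - n₁) / (N - n) ≤ β₂ - l₅ - 1 := by
    rw [e3]
    constructor <;> intro h <;> linarith
  rw [e4, e1, e2, sub_nonpos, div_le_div_iff₀ h4 h3, div_le_iff₀ h2, mul_comm (N - n)]
end
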